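/- (Band generator presentation of B_3.) The group homomorphism from the presented group ⟨a_1, a_2, a_3 | a_2 a_1 = a_3 a_2, a_3 a_2 = a_1 a_3⟩ to B_3 determined by a_1 ↦ σ_1, a_2 ↦ σ_2, a_3 ↦ σ_2 σ_1 σ_2⁻¹ is an isomorphism. -/

import Mathlib

/-!
The first relation `a₂ a₁ = a₃ a₂` says that `a₃ = a₂ a₁ a₂⁻¹`, so `a₃` is redundant, and the
second one then becomes the braid relation: `a₁ a₂ a₁ = a₁ a₃ a₂ = a₂ a₁ a₂`. Hence `σ₁ ↦ a₁`,
`σ₂ ↦ a₂` defines a homomorphism `B3 →* PresentedGroup bandRels`, and it is a two-sided inverse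
of `φ` because both composites fix the generators.
-/

/-- The defining relator of the braid group on 3 strands. -/
def braidRels3 : Set (FreeGroup (Fin 2)) :=
  {FreeGroup.of 0 * FreeGroup.of 1 * FreeGroup.of 0 *
    (FreeGroup.of 1 * FreeGroup.of 0 * FreeGroup.of 1)⁻¹}

/-- The braid group on 3 strands. -/
abbrev B3 : Type := PresentedGroup braidRels3

/-- The generator `σ₁` of `B3`. -/
abbrev B3.sig1 : B3 := PresentedGroup.of 0
/-- The generator `σ₂` of `B3`. -/
abbrev B3.sig2 : B3 := PresentedGroup.of 1

/-- The relators of the band generator presentation of `B3`: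
`a₂ a₁ = a₃ a₂` and `a₃ a₂ = a₁ a₃`. -/
def bandRels : Set (FreeGroup (Fin 3)) :=
  {FreeGroup.of 1 * FreeGroup.of 0 * (FreeGroup.of 2 * FreeGroup.of 1)⁻¹,
   FreeGroup.of 2 * FreeGroup.of 1 * (FreeGroup.of 0 * FreeGroup.of 2)⁻¹}

theorem band_rel_one :
    (PresentedGroup.of 1 * PresentedGroup.of 0 : PresentedGroup bandRels) =
      PresentedGroup.of 2 * PresentedGroup.of 1 :=
  PresentedGroup.mk_eq_mk_of_mul_inv_mem (rels := bandRels)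
    (x := FreeGroup.of 1 * FreeGroup.of 0) (y := FreeGroup.of 2 * FreeGroup.of 1)
    (Or.inl rfl)

theorem band_rel_two :
    (PresentedGroup.of 2 * PresentedGroup.of 1 : PresentedGroup bandRels) =
      PresentedGroup.of 0 * PresentedGroup.of 2 :=
  PresentedGroup.mk_eq_mk_of_mul_inv_mem (rels := bandRels)
    (x := FreeGroup.of 2 * FreeGroup.of 1) (y := FreeGroup.of 0 * FreeGroup.of 2)
    (Or.inr rfl)

theorem band_braid_rel :
    (PresentedGroup.of 0 * PresentedGroup.of 1 * PresentedGroup.of 0 : PresentedGroup bandRels) =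
      PresentedGroup.of 1 * PresentedGroup.of 0 * PresentedGroup.of 1 := by
  rw [mul_assoc, band_rel_one, ← mul_assoc, ← band_rel_two]

/-- The homomorphism `σ₁ ↦ a₁`, `σ₂ ↦ a₂` from `B3` to the band generator group. -/
def bandInv : B3 →* PresentedGroup bandRels :=
  PresentedGroup.toGroup (rels := braidRels3)
    (f := ![PresentedGroup.of 0, PresentedGroup.of 1]) (by
      rintro r rfl
      simpa [mul_inv_eq_one, ← mul_assoc] using mul_inv_eq_one.mpr band_braid_rel)

theorem bandInv_sig1 : bandInv B3.sig1 = PresentedGroup.of 0 :=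
  PresentedGroup.toGroup.of _

theorem bandInv_sig2 : bandInv B3.sig2 = PresentedGroup.of 1 :=
  PresentedGroup.toGroup.of _

/-- band generator presentation of `B3`: the group homomorphism
from `⟨a₁, a₂, a₃ | a₂ a₁ = a₃ a₂, a₃ a₂ = a₁ a₃⟩` to `B3` determined by
`a₁ ↦ σ₁`, `a₂ ↦ σ₂`, `a₃ ↦ σ₂ σ₁ σ₂⁻¹` is an isomorphism. -/
theorem band_generator_presentation (φ : PresentedGroup bandRels →* B3)
    (h1 : φ (PresentedGroup.of 0) = B3.sig1)
    (h2 : φ (PresentedGroup.of 1) = B3.sig2)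
    (h3 : φ (PresentedGroup.of 2) = B3.sig2 * B3.sig1 * B3.sig2⁻¹) :
    Function.Bijective φ := by
  have hl : bandInv.comp φ = MonoidHom.id _ := by
    refine PresentedGroup.ext fun x => ?_
    fin_cases x
    · exact (congrArg bandInv h1).trans bandInv_sig1
    · exact (congrArg bandInv h2).trans bandInv_sig2
    · refine (congrArg bandInv h3).trans ?_
      rw [map_mul, map_mul, map_inv, bandInv_sig1, bandInv_sig2]
      exact mul_inv_eq_of_eq_mul band_rel_one
  have hr : φ.comp bandInv = MonoidHom.id _ := by
    refine PresentedGroup.ext fun x => ?_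
    fin_cases x
    · exact (congrArg φ bandInv_sig1).trans h1
    · exact (congrArg φ bandInv_sig2).trans h2
  exact Function.bijective_iff_has_inverse.mpr
    ⟨bandInv, DFunLike.congr_fun hl, DFunLike.congr_fun hr⟩
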